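/- Let I ⊆ k[x_1,…,x_n] be an ideal and ≺ a term order. Then the equivalence class {u ∈ ℝ^n : in_u(I) = in_≺(I)} is a nonempty, open, convex subset of ℝ^n closed under multiplication by positive scalars; in particular it is a full-dimensional open convex cone. -/

import Mathlib

/-!
Write `L` for the set of `≺`-leading exponents of nonzero elements of `I`, so that `in_≺(I)` is the
monomial ideal spanned by `L`.  By Dickson's lemma `L` has finitely many minimal elements `α`, and
reduction modulo `I` (well-founded induction along `≺`) gives for each of them some `g_α ∈ I` of the
form `x^α` plus terms whose exponents are `≺ α` and outside `L`: the reduced Gröbner basis.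

The class of `≺` is cut out by the strict linear inequalities `⟨u, γ⟩ < ⟨u, α⟩`, for `γ ≠ α` in the
support of `g_α` (`initialFormIdeal_eq_iff`).

* If `in_u(I) = in_≺(I)`, every exponent of `in_u(g_α)` lies in `L`, which leaves only `α`.
* Conversely, let the inequalities hold.  Then `x^α = in_u(g_α)`, so `in_≺(I) ⊆ in_u(I)`.  For the
  other inclusion, divide `f ∈ I` by the `g_α`, always cancelling the `≺`-leading term.  Each step
  subtracts a multiple of some `x^δ g_α` whose unique term of largest `u`-degree is the cancelled one,
  so the `u`-degree never rises above that of `f` and every term of top `u`-degree of `f` has its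
  exponent in `L`.  No refinement of `u` to a term order is used, so `u` may have negative entries.

A finite intersection of open half-spaces through the origin is an open convex cone.  It is nonempty
because finitely many relations `γ ≺ α` are always realised by a weight vector
(`exists_dotProduct_pos`); this is a theorem of the alternative, proved over `ℤ` by induction on the
number of relations.
-/

open MvPolynomial

/-- A term order on the monomials of `k[x_1,…,x_n]`, identified with exponent
vectors in `ℕ^n`: a strict total order with `1` smallest and compatible with
multiplication of monomials. -/
structure TermOrder (n : ℕ) : Type where
  lt : (Fin n →₀ ℕ) → (Fin n →₀ ℕ) → Prop
  irrefl : ∀ a, ¬ lt a a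
  trans : ∀ a b c, lt a b → lt b c → lt a c
  total : ∀ a b, a ≠ b → lt a b ∨ lt b a
  zero_lt : ∀ a, a ≠ 0 → lt 0 a
  add_right : ∀ a b c, lt a b → lt (a + c) (b + c)

variable {n : ℕ} {k : Type*} [Field k]

/-- The exponent of the `τ`-largest term of `f` (and `0` if `f = 0`). -/
noncomputable def TermOrder.leadExp (τ : TermOrder n) (f : MvPolynomial (Fin n) k) :
    Fin n →₀ ℕ :=
  letI := Classical.propDecidable (∃ α, α ∈ f.support ∧ ∀ β ∈ f.support, β ≠ α → τ.lt β α)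
  if h : ∃ α, α ∈ f.support ∧ ∀ β ∈ f.support, β ≠ α → τ.lt β α then h.choose else 0

/-- The initial term `in_τ(f)` : the `τ`-largest term of `f` (with coefficient). -/
noncomputable def TermOrder.initialTerm (τ : TermOrder n) (f : MvPolynomial (Fin n) k) :
    MvPolynomial (Fin n) k :=
  monomial (τ.leadExp f) (f.coeff (τ.leadExp f))

/-- The initial ideal `in_τ(I) = ⟨in_τ(f) : f ∈ I \ {0}⟩`. -/
noncomputable def TermOrder.initialIdeal (τ : TermOrder n) (I : Ideal (MvPolynomial (Fin n) k)) :
    Ideal (MvPolynomial (Fin n) k) :=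
  Ideal.span {p | ∃ f ∈ I, f ≠ 0 ∧ p = τ.initialTerm f}

/-- The `ω`-degree `⟨ω,α⟩` of a monomial exponent `α`. -/
noncomputable def wdeg (ω : Fin n → ℝ) (α : Fin n →₀ ℕ) : ℝ := ∑ i, ω i * (α i : ℝ)

/-- The initial form `in_ω(f)`: the sum of the terms of `f` whose exponents
maximize `⟨ω,·⟩`. -/
noncomputable def initialForm (ω : Fin n → ℝ) (f : MvPolynomial (Fin n) k) :
    MvPolynomial (Fin n) k :=
  letI : DecidablePred fun α : Fin n →₀ ℕ => ∀ β ∈ f.support, wdeg ω β ≤ wdeg ω α :=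
    Classical.decPred _
  ∑ α ∈ f.support.filter (fun α => ∀ β ∈ f.support, wdeg ω β ≤ wdeg ω α),
    monomial α (f.coeff α)

/-- The initial ideal `in_ω(I) = ⟨in_ω(f) : f ∈ I⟩`. -/
noncomputable def initialFormIdeal (ω : Fin n → ℝ) (I : Ideal (MvPolynomial (Fin n) k)) :
    Ideal (MvPolynomial (Fin n) k) :=
  Ideal.span {p | ∃ f ∈ I, p = initialForm ω f}

/-- `C_≺(I)`: the closure of `{u : in_u(I) = in_≺(I)}` in `ℝ^n`. -/
noncomputable def Cprec (τ : TermOrder n) (I : Ideal (MvPolynomial (Fin n) k)) :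
    Set (Fin n → ℝ) :=
  closure {u : Fin n → ℝ | initialFormIdeal u I = τ.initialIdeal I}

/-- `C_v(I)`: the closure of the equivalence class `{u : in_u(I) = in_v(I)}`. -/
noncomputable def Cv (I : Ideal (MvPolynomial (Fin n) k)) (v : Fin n → ℝ) :
    Set (Fin n → ℝ) :=
  closure {u : Fin n → ℝ | initialFormIdeal u I = initialFormIdeal v I}

/-- `F` is a face of `C`: either empty or the set of maximizers over `C` of a
linear functional. -/
def IsFaceOf (C F : Set (Fin n → ℝ)) : Prop :=
  F = ∅ ∨ ∃ w : Fin n → ℝ, F = {x ∈ C | ∀ y ∈ C, ∑ i, w i * y i ≤ ∑ i, w i * x i}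

/-- The Gröbner fan of `I`: all nonempty faces of the cones `C_v(I)`, `v ∈ ℝ^n_{>0}`. -/
noncomputable def GroebnerFan (I : Ideal (MvPolynomial (Fin n) k)) :
    Set (Set (Fin n → ℝ)) :=
  {F | F.Nonempty ∧ ∃ v : Fin n → ℝ, (∀ i, 0 < v i) ∧ IsFaceOf (Cv I v) F}

/-- `G` is a (finite) Gröbner basis of `I` w.r.t. `τ`. -/
def IsGroebnerBasis (τ : TermOrder n) (I : Ideal (MvPolynomial (Fin n) k))
    (G : Set (MvPolynomial (Fin n) k)) : Prop :=
  G.Finite ∧ Ideal.span G = I ∧ τ.initialIdeal I = Ideal.span (τ.initialTerm '' G)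

/-- `G` is the reduced Gröbner basis of `I` w.r.t. `τ`. -/
def IsReducedGroebnerBasis (τ : TermOrder n) (I : Ideal (MvPolynomial (Fin n) k))
    (G : Set (MvPolynomial (Fin n) k)) : Prop :=
  IsGroebnerBasis τ I G ∧
  (∀ g ∈ G, g.coeff (τ.leadExp g) = 1) ∧
  (∀ g ∈ G, ∀ α ∈ g.support, α ≠ τ.leadExp g →
    (monomial α 1 : MvPolynomial (Fin n) k) ∉ τ.initialIdeal I) ∧
  (∀ g ∈ G, Ideal.span (τ.initialTerm '' (G \ {g})) ≠ τ.initialIdeal I)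

/-! ### Term orders and leading exponents -/

namespace TermOrder

variable (τ : TermOrder n)

lemma asymm {a b : Fin n →₀ ℕ} (h : τ.lt a b) : ¬ τ.lt b a :=
  fun h' => τ.irrefl a (τ.trans _ _ _ h h')

lemma not_lt_of_le {a b : Fin n →₀ ℕ} (h : a ≤ b) : ¬ τ.lt b a := by
  obtain ⟨c, rfl⟩ := exists_add_of_le h
  intro hlt
  by_cases hc : c = 0
  · subst hc
    simp only [add_zero] at hlt
    exact τ.irrefl _ hlt
  · have h2 := τ.add_right _ _ a (τ.zero_lt c hc)
    rw [zero_add, add_comm] at h2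
    exact τ.asymm h2 hlt

lemma wf : WellFounded τ.lt := by
  rw [wellFounded_iff_isEmpty_descending_chain]
  refine ⟨fun ⟨f, hf⟩ => ?_⟩
  have hlt : ∀ i d, τ.lt (f (i + d + 1)) (f i) := by
    intro i d
    induction d with
    | zero => exact hf i
    | succ d ih => exact τ.trans _ _ _ (hf _) ih
  obtain ⟨i, j, hij, hle⟩ := wellQuasiOrdered_le f
  obtain ⟨d, rfl⟩ := Nat.exists_eq_add_of_lt hij
  exact τ.not_lt_of_le hle (hlt i d)

/-- `α` is the exponent of the `τ`-largest term of the (nonzero) polynomial `f`. -/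
def IsLead (f : MvPolynomial (Fin n) k) (α : Fin n →₀ ℕ) : Prop :=
  α ∈ f.support ∧ ∀ β ∈ f.support, β ≠ α → τ.lt β α

variable {τ}

lemma IsLead.eq {f : MvPolynomial (Fin n) k} {α β : Fin n →₀ ℕ}
    (h : τ.IsLead f α) (h' : τ.IsLead f β) : α = β := by
  by_contra hne
  exact τ.asymm (h'.2 _ h.1 hne) (h.2 _ h'.1 (Ne.symm hne))

variable (τ)

lemma exists_isLead {f : MvPolynomial (Fin n) k} (hf : f ≠ 0) : ∃ α, τ.IsLead f α := by
  have key : ∀ s : Finset (Fin n →₀ ℕ), s.Nonempty →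
      ∃ α, α ∈ s ∧ ∀ β ∈ s, β ≠ α → τ.lt β α := by
    intro s hs
    induction hs using Finset.Nonempty.cons_induction with
    | singleton a => exact ⟨a, by simp, by simp⟩
    | cons a s ha hs ih =>
      obtain ⟨α, hα, hmax⟩ := ih
      have hne : a ≠ α := fun h => ha (h ▸ hα)
      rcases τ.total _ _ hne with h | h
      · refine ⟨α, by simp [hα], fun β hβ hβα => ?_⟩
        rcases Finset.mem_cons.1 hβ with rfl | hβ
        · exact h
        · exact hmax β hβ hβα
      · refine ⟨a, by simp, fun β hβ hβa => ?_⟩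
        rcases Finset.mem_cons.1 hβ with rfl | hβ
        · exact absurd rfl hβa
        · by_cases hβα : β = α
          · exact hβα ▸ h
          · exact τ.trans _ _ _ (hmax β hβ hβα) h
  exact key _ (support_nonempty.2 hf)

lemma isLead_leadExp {f : MvPolynomial (Fin n) k} (hf : f ≠ 0) : τ.IsLead f (τ.leadExp f) := by
  have h := τ.exists_isLead hf
  unfold IsLead at h
  unfold leadExp IsLead
  rw [dif_pos h]
  exact h.choose_spec

/-- The set of `τ`-leading exponents of nonzero elements of `I`. -/
def leadSet (I : Ideal (MvPolynomial (Fin n) k)) : Set (Fin n →₀ ℕ) :=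
  {α | ∃ f ∈ I, τ.IsLead f α}

variable {τ}
variable {I : Ideal (MvPolynomial (Fin n) k)}

lemma add_mem_leadSet {α : Fin n →₀ ℕ} (hα : α ∈ τ.leadSet I) (δ : Fin n →₀ ℕ) :
    δ + α ∈ τ.leadSet I := by
  obtain ⟨f, hf, hl⟩ := hα
  refine ⟨monomial δ 1 * f, I.mul_mem_left _ hf, ?_, fun β hβ hne => ?_⟩
  · rw [mem_support_iff, coeff_monomial_mul, one_mul]
    exact mem_support_iff.1 hl.1
  · rw [mem_support_iff, coeff_monomial_mul'] at hβ
    split_ifs at hβ with hle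
    · obtain ⟨γ, rfl⟩ := exists_add_of_le hle
      rw [add_tsub_cancel_left, one_mul] at hβ
      have := τ.add_right _ _ δ (hl.2 γ (mem_support_iff.2 hβ) (by rintro rfl; exact hne rfl))
      rwa [add_comm γ, add_comm α] at this
    · exact absurd rfl hβ

lemma mem_leadSet_of_le {α β : Fin n →₀ ℕ} (hα : α ∈ τ.leadSet I) (h : α ≤ β) :
    β ∈ τ.leadSet I := by
  obtain ⟨δ, rfl⟩ := exists_add_of_le h
  rw [add_comm]
  exact add_mem_leadSet hα δ

variable (τ I)

lemma initialIdeal_eq :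
    τ.initialIdeal I = Ideal.span ((fun α => monomial α (1 : k)) '' τ.leadSet I) := by
  apply le_antisymm
  · refine Ideal.span_le.2 ?_
    rintro _ ⟨f, hf, hf0, rfl⟩
    have hmem : (monomial (τ.leadExp f) (1 : k)) ∈
        Ideal.span ((fun α => monomial α (1 : k)) '' τ.leadSet I) :=
      Ideal.subset_span ⟨_, ⟨f, hf, τ.isLead_leadExp hf0⟩, rfl⟩
    have := Ideal.mul_mem_left _ (C (f.coeff (τ.leadExp f))) hmem
    rwa [C_mul_monomial, mul_one] at this
  · refine Ideal.span_le.2 ?_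
    rintro _ ⟨α, ⟨f, hf, hl⟩, rfl⟩
    have hf0 : f ≠ 0 := by
      rintro rfl
      simpa using hl.1
    have heq := hl.eq (τ.isLead_leadExp hf0)
    have hmem : τ.initialTerm f ∈ τ.initialIdeal I := Ideal.subset_span ⟨f, hf, hf0, rfl⟩
    have := Ideal.mul_mem_left _ (C (f.coeff α)⁻¹) hmem
    rw [initialTerm, ← heq, C_mul_monomial, inv_mul_cancel₀ (mem_support_iff.1 hl.1)] at this
    exact this

variable {τ I}

lemma mem_initialIdeal_iff {p : MvPolynomial (Fin n) k} :
    p ∈ τ.initialIdeal I ↔ ∀ β ∈ p.support, β ∈ τ.leadSet I := by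
  rw [initialIdeal_eq, mem_ideal_span_monomial_image]
  refine forall₂_congr fun β _ => ⟨?_, fun h => ⟨β, h, le_rfl⟩⟩
  rintro ⟨α, hα, hle⟩
  exact mem_leadSet_of_le hα hle

/-! ### The reduced Gröbner basis -/

variable (τ I)

lemma exists_finite_generators :
    ∃ A : Set (Fin n →₀ ℕ), A.Finite ∧ A ⊆ τ.leadSet I ∧
      ∀ β ∈ τ.leadSet I, ∃ α ∈ A, α ≤ β := by
  refine ⟨{α | Minimal (· ∈ τ.leadSet I) α}, ?_, fun α h => h.prop, fun β hβ => ?_⟩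
  · exact WellQuasiOrderedLE.finite_of_isAntichain (setOfPred_minimal_antichain _)
  · obtain ⟨α, hle, hα⟩ := exists_minimal_le_of_wellFoundedLT (· ∈ τ.leadSet I) β hβ
    exact ⟨α, hα, hle⟩

/-- Every monomial `x^α` has a normal form modulo `I`, supported on `α` and smaller exponents. -/
lemma exists_normalForm (α : Fin n →₀ ℕ) :
    ∃ r : MvPolynomial (Fin n) k, monomial α 1 - r ∈ I ∧
      ∀ γ ∈ r.support, γ ∉ τ.leadSet I ∧ (γ = α ∨ τ.lt γ α) := by
  classical
  induction α using τ.wf.induction with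
  | _ α ih =>
  by_cases hα : α ∈ τ.leadSet I
  · obtain ⟨f, hf, hl⟩ := hα
    choose! r hr hrs using ih
    have hc : f.coeff α ≠ 0 := mem_support_iff.1 hl.1
    -- Replace each lower monomial of `x^α - f / lc f` by its normal form.
    refine ⟨- ∑ β ∈ f.support.erase α, C ((f.coeff α)⁻¹ * f.coeff β) * r β, ?_, ?_⟩
    · have hfsum : f = monomial α (f.coeff α) +
          ∑ β ∈ f.support.erase α, monomial β (f.coeff β) := by
        rw [Finset.add_sum_erase _ (fun β => monomial β (f.coeff β)) hl.1]
        exact f.as_sum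
      have hid : monomial α (1 : k) -
            - ∑ β ∈ f.support.erase α, C ((f.coeff α)⁻¹ * f.coeff β) * r β =
          C (f.coeff α)⁻¹ * f - ∑ β ∈ f.support.erase α,
            C ((f.coeff α)⁻¹ * f.coeff β) * (monomial β 1 - r β) := by
        have h1 : C (f.coeff α)⁻¹ * f = monomial α 1 +
            ∑ β ∈ f.support.erase α, C ((f.coeff α)⁻¹ * f.coeff β) * monomial β 1 := by
          refine (congrArg (C (f.coeff α)⁻¹ * ·) hfsum).trans ?_
          rw [mul_add, C_mul_monomial, inv_mul_cancel₀ hc, Finset.mul_sum]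
          congr 1
          refine Finset.sum_congr rfl fun β _ => ?_
          rw [C_mul_monomial, C_mul_monomial, mul_one]
        rw [h1]
        simp only [mul_sub, Finset.sum_sub_distrib]
        ring
      rw [hid]
      refine I.sub_mem (I.mul_mem_left _ hf) (I.sum_mem fun β hβ => I.mul_mem_left _ ?_)
      exact hr β (hl.2 β (Finset.mem_of_mem_erase hβ) (Finset.ne_of_mem_erase hβ))
    · intro γ hγ
      rw [support_neg] at hγ
      obtain ⟨β, hβ, hγβ⟩ := Finset.mem_biUnion.1 (support_sum hγ)
      have hβα := hl.2 β (Finset.mem_of_mem_erase hβ) (Finset.ne_of_mem_erase hβ)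
      have hγr : γ ∈ (r β).support := by
        rw [mem_support_iff, coeff_C_mul] at hγβ
        exact mem_support_iff.2 (right_ne_zero_of_mul hγβ)
      obtain ⟨h1, h2⟩ := hrs β hβα γ hγr
      refine ⟨h1, Or.inr ?_⟩
      rcases h2 with rfl | h2
      · exact hβα
      · exact τ.trans _ _ _ h2 hβα
  · refine ⟨monomial α 1, by simp, fun γ hγ => ?_⟩
    have : γ = α := by simpa using support_monomial_subset hγ
    exact ⟨this ▸ hα, Or.inl this⟩

/-- `g` is monic with leading exponent `α`, and no other exponent of `g` is a leading exponent of
an element of `I`: the defining properties of the reduced Gröbner basis element led by `x^α`. -/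
structure IsReducedAt (g : MvPolynomial (Fin n) k) (α : Fin n →₀ ℕ) : Prop where
  mem : g ∈ I
  coeff_eq : g.coeff α = 1
  lt : ∀ γ ∈ g.support, γ ≠ α → τ.lt γ α
  notMem : ∀ γ ∈ g.support, γ ≠ α → γ ∉ τ.leadSet I

variable {I} in
lemma exists_isReducedAt {α : Fin n →₀ ℕ} (hα : α ∈ τ.leadSet I) :
    ∃ g : MvPolynomial (Fin n) k, τ.IsReducedAt I g α := by
  classical
  obtain ⟨r, hr, hrs⟩ := τ.exists_normalForm I α
  have hmem : ∀ γ ∈ (monomial α (1 : k) - r).support, γ ≠ α → γ ∈ r.support := by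
    intro γ hγ hne
    rw [mem_support_iff, coeff_sub, coeff_monomial, if_neg hne.symm, zero_sub] at hγ
    exact mem_support_iff.2 (neg_ne_zero.1 hγ)
  refine ⟨monomial α 1 - r, hr, ?_, fun γ hγ hne => ?_, fun γ hγ hne => ?_⟩
  · have : r.coeff α = 0 := by
      by_contra h
      exact (hrs α (mem_support_iff.2 h)).1 hα
    simp [this]
  · exact (hrs γ (hmem γ hγ hne)).2.resolve_left hne
  · exact (hrs γ (hmem γ hγ hne)).1

end TermOrder

/-! ### Weights and initial forms -/

lemma wdeg_add_right (u : Fin n → ℝ) (α β : Fin n →₀ ℕ) :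
    wdeg u (α + β) = wdeg u α + wdeg u β := by
  simp [wdeg, mul_add, Finset.sum_add_distrib]

lemma wdeg_add_left (u v : Fin n → ℝ) (α : Fin n →₀ ℕ) :
    wdeg (u + v) α = wdeg u α + wdeg v α := by
  simp [wdeg, add_mul, Finset.sum_add_distrib]

lemma wdeg_smul_left (c : ℝ) (u : Fin n → ℝ) (α : Fin n →₀ ℕ) :
    wdeg (c • u) α = c * wdeg u α := by
  simp [wdeg, Finset.mul_sum, mul_assoc]

lemma continuous_wdeg (α : Fin n →₀ ℕ) : Continuous fun u : Fin n → ℝ => wdeg u α := by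
  unfold wdeg
  fun_prop

lemma coeff_initialForm (u : Fin n → ℝ) (f : MvPolynomial (Fin n) k) (β : Fin n →₀ ℕ)
    [Decidable (∀ γ ∈ f.support, wdeg u γ ≤ wdeg u β)] :
    (initialForm u f).coeff β =
      if ∀ γ ∈ f.support, wdeg u γ ≤ wdeg u β then f.coeff β else 0 := by
  classical
  rw [initialForm, coeff_sum]
  simp only [coeff_monomial, Finset.sum_ite_eq', Finset.mem_filter, mem_support_iff]
  by_cases h : ∀ γ, f.coeff γ ≠ 0 → wdeg u γ ≤ wdeg u β <;>
    by_cases h0 : f.coeff β = 0 <;> simp [h, h0]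

lemma mem_support_initialForm {u : Fin n → ℝ} {f : MvPolynomial (Fin n) k} {β : Fin n →₀ ℕ} :
    β ∈ (initialForm u f).support ↔
      β ∈ f.support ∧ ∀ γ ∈ f.support, wdeg u γ ≤ wdeg u β := by
  classical
  rw [mem_support_iff, mem_support_iff, coeff_initialForm]
  split_ifs with h
  · exact ⟨fun h0 => ⟨h0, h⟩, fun h0 => h0.1⟩
  · exact ⟨fun h0 => absurd rfl h0, fun h0 => absurd h0.2 h⟩

namespace TermOrder

variable {τ : TermOrder n} {I : Ideal (MvPolynomial (Fin n) k)}

/-- The division argument: if every exponent of `p ∈ I` has `u`-degree at most `d`, then those of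
`u`-degree exactly `d` are leading exponents of elements of `I`. -/
lemma mem_leadSet_of_wdeg_eq {A : Set (Fin n →₀ ℕ)} {g : (Fin n →₀ ℕ) → MvPolynomial (Fin n) k}
    (hA : A ⊆ τ.leadSet I) (hgen : ∀ β ∈ τ.leadSet I, ∃ α ∈ A, α ≤ β)
    (hg : ∀ α ∈ A, τ.IsReducedAt I (g α) α) {u : Fin n → ℝ}
    (hu : ∀ α ∈ A, ∀ γ ∈ (g α).support, γ ≠ α → wdeg u γ < wdeg u α) {d : ℝ}
    (ε : Fin n →₀ ℕ) : ∀ p ∈ I, τ.IsLead p ε → (∀ β ∈ p.support, wdeg u β ≤ d) →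
      ∀ β ∈ p.support, wdeg u β = d → β ∈ τ.leadSet I := by
  classical
  induction ε using τ.wf.induction with
  | _ ε ih =>
  intro p hp hl hd β hβ hβd
  obtain ⟨α, hαA, hle⟩ := hgen ε ⟨p, hp, hl⟩
  obtain ⟨δ, rfl⟩ := exists_add_of_le hle
  rw [add_comm α δ] at *
  set m := monomial δ (p.coeff (δ + α)) * g α with hm
  have hmsupp : ∀ γ ∈ m.support, ∃ γ' ∈ (g α).support, γ = δ + γ' := by
    intro γ hγ
    rw [mem_support_iff, hm, coeff_monomial_mul'] at hγ
    split_ifs at hγ with h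
    · obtain ⟨γ', rfl⟩ := exists_add_of_le h
      rw [add_tsub_cancel_left] at hγ
      exact ⟨γ', mem_support_iff.2 (right_ne_zero_of_mul hγ), rfl⟩
    · exact absurd rfl hγ
  have hmdeg : ∀ γ ∈ m.support, γ ≠ δ + α → wdeg u γ < d ∧ τ.lt γ (δ + α) := by
    intro γ hγ hne
    obtain ⟨γ', hγ', rfl⟩ := hmsupp γ hγ
    have hne' : γ' ≠ α := by rintro rfl; exact hne rfl
    have h1 := hu α hαA γ' hγ' hne'
    have h2 := hd _ hl.1
    rw [wdeg_add_right] at h2 ⊢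
    have h3 := τ.add_right _ _ δ ((hg α hαA).lt γ' hγ' hne')
    rw [add_comm γ', add_comm α] at h3
    exact ⟨by linarith, h3⟩
  have hcancel : (p - m).coeff (δ + α) = 0 := by
    rw [coeff_sub, hm, coeff_monomial_mul, (hg α hαA).coeff_eq, mul_one, sub_self]
  by_cases hβε : β = δ + α
  · exact hβε ▸ add_mem_leadSet (hA hαA) δ
  have hβm : β ∉ m.support := fun h => (hmdeg β h hβε).1.ne hβd
  have hβq : β ∈ (p - m).support := by
    rw [mem_support_iff, coeff_sub, notMem_support_iff.1 hβm, sub_zero]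
    exact mem_support_iff.1 hβ
  have hqsupp : ∀ γ ∈ (p - m).support, γ ≠ δ + α ∧ (γ ∈ p.support ∨ γ ∈ m.support) := by
    intro γ hγ
    refine ⟨fun h => mem_support_iff.1 hγ (h ▸ hcancel), ?_⟩
    exact Finset.mem_union.1 (support_sub _ _ _ hγ)
  have hq0 : p - m ≠ 0 := by
    intro h
    rw [h] at hβq
    simp at hβq
  obtain ⟨ε', hl'⟩ := τ.exists_isLead hq0
  refine ih ε' ?_ (p - m) (I.sub_mem hp (I.mul_mem_left _ (hg α hαA).mem)) hl' ?_ β hβq hβd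
  · obtain ⟨hne, h | h⟩ := hqsupp ε' hl'.1
    · exact hl.2 _ h hne
    · exact (hmdeg _ h hne).2
  · intro γ hγ
    obtain ⟨hne, h | h⟩ := hqsupp γ hγ
    · exact hd γ h
    · exact (hmdeg γ h hne).1.le

/-- The class of `τ` is cut out by the strict inequalities read off from the reduced Gröbner
basis. -/
lemma initialFormIdeal_eq_iff {A : Set (Fin n →₀ ℕ)}
    {g : (Fin n →₀ ℕ) → MvPolynomial (Fin n) k}
    (hA : A ⊆ τ.leadSet I) (hgen : ∀ β ∈ τ.leadSet I, ∃ α ∈ A, α ≤ β)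
    (hg : ∀ α ∈ A, τ.IsReducedAt I (g α) α) (u : Fin n → ℝ) :
    initialFormIdeal u I = τ.initialIdeal I ↔
      ∀ α ∈ A, ∀ γ ∈ (g α).support, γ ≠ α → wdeg u γ < wdeg u α := by
  classical
  have hsupp : ∀ α ∈ A, α ∈ (g α).support := fun α hα => by
    rw [mem_support_iff, (hg α hα).coeff_eq]
    exact one_ne_zero
  constructor
  · intro h α hα
    have hin : initialForm u (g α) ∈ τ.initialIdeal I :=
      h ▸ Ideal.subset_span ⟨g α, (hg α hα).mem, rfl⟩
    rw [mem_initialIdeal_iff] at hin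
    have honly : ∀ β ∈ (g α).support, (∀ γ ∈ (g α).support, wdeg u γ ≤ wdeg u β) → β = α := by
      intro β hβ hmax
      by_contra hne
      exact (hg α hα).notMem β hβ hne (hin β (mem_support_initialForm.2 ⟨hβ, hmax⟩))
    obtain ⟨β, hβ, hmax⟩ := Finset.exists_max_image (g α).support (wdeg u) ⟨α, hsupp α hα⟩
    obtain rfl := honly β hβ hmax
    intro γ hγ hne
    refine lt_of_le_of_ne (hmax γ hγ) fun heq => hne (honly γ hγ ?_)
    exact fun δ hδ => heq ▸ hmax δ hδ
  · intro h
    apply le_antisymm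
    · refine Ideal.span_le.2 ?_
      rintro _ ⟨f, hf, rfl⟩
      refine mem_initialIdeal_iff.2 fun β hβ => ?_
      obtain ⟨hβf, hmax⟩ := mem_support_initialForm.1 hβ
      have hf0 : f ≠ 0 := by
        rintro rfl
        simp at hβf
      obtain ⟨ε, hε⟩ := τ.exists_isLead hf0
      exact mem_leadSet_of_wdeg_eq hA hgen hg h ε f hf hε hmax β hβf rfl
    · rw [initialIdeal_eq]
      refine Ideal.span_le.2 ?_
      rintro _ ⟨β, hβ, rfl⟩
      obtain ⟨α, hα, hle⟩ := hgen β hβ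
      have hform : initialForm u (g α) = monomial α 1 := by
        ext γ
        rw [coeff_initialForm, coeff_monomial]
        by_cases hγα : γ = α
        · subst hγα
          rw [if_pos rfl, if_pos, (hg γ hα).coeff_eq]
          intro δ hδ
          by_cases hne : δ = γ
          · rw [hne]
          · exact (h γ hα δ hδ hne).le
        · rw [if_neg (Ne.symm hγα)]
          split_ifs with hmax
          · by_contra h0
            exact absurd (hmax α (hsupp α hα))
              (not_le.2 (h α hα γ (mem_support_iff.2 h0) hγα))
          · rfl
      have hmem : monomial α (1 : k) ∈ initialFormIdeal u I :=
        hform ▸ Ideal.subset_span ⟨g α, (hg α hα).mem, rfl⟩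
      obtain ⟨δ, rfl⟩ := exists_add_of_le hle
      have := Ideal.mul_mem_left _ (monomial δ (1 : k)) hmem
      rw [monomial_mul, one_mul, add_comm] at this
      exact this

end TermOrder

/-! ### Realising finitely many comparisons by a weight vector -/

/-- A theorem of the alternative: if `P` is closed under addition and omits `0`, then any finite
family of vectors in `P` lies in an open half-space. -/
lemma exists_dotProduct_pos {P : (Fin n → ℤ) → Prop} (hadd : ∀ a b, P a → P b → P (a + b))
    (h0 : ¬ P 0) : ∀ (N : ℕ) (D : List (Fin n → ℤ)), D.length = N → (∀ d ∈ D, P d) →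
      ∃ u : Fin n → ℤ, ∀ d ∈ D, 0 < u ⬝ᵥ d := by
  have hsmul : ∀ (m : ℕ) a, P a → P (((m + 1 : ℕ) : ℤ) • a) := by
    intro m a ha
    induction m with
    | zero => simpa using ha
    | succ m ih =>
      have := hadd _ _ ih ha
      rwa [← add_one_zsmul] at this
  have hsmul' : ∀ c : ℤ, 0 < c → ∀ a, P a → P (c • a) := by
    intro c hc a ha
    obtain ⟨m, rfl⟩ : ∃ m : ℕ, c = ((m + 1 : ℕ) : ℤ) := ⟨(c - 1).toNat, by omega⟩
    exact hsmul m a ha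
  have hbound : ∀ (D : List (Fin n → ℤ)) (f : (Fin n → ℤ) → ℤ), ∃ M : ℤ, 0 < M ∧
      ∀ d ∈ D, f d < M := by
    intro D f
    induction D with
    | nil => exact ⟨1, by simp, by simp⟩
    | cons a D ih =>
      obtain ⟨M, hM, h⟩ := ih
      refine ⟨max M (f a + 1), by simp [hM], fun d hd => ?_⟩
      rcases List.mem_cons.1 hd with rfl | hd
      · exact lt_max_of_lt_right (by omega)
      · exact lt_max_of_lt_left (h d hd)
  intro N
  induction N with
  | zero =>
    intro D hD _
    rw [List.length_eq_zero_iff] at hD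
    subst hD
    exact ⟨0, by simp⟩
  | succ N ih =>
    intro D hD hP
    obtain ⟨e, D, rfl⟩ := List.exists_cons_of_length_eq_add_one hD
    have hD' : D.length = N := by simpa using hD
    have hPe : P e := hP e (by simp)
    have hPD : ∀ d ∈ D, P d := fun d hd => hP d (by simp [hd])
    obtain ⟨φ, hφ⟩ := ih D hD' hPD
    rcases lt_trichotomy (φ ⬝ᵥ e) 0 with hneg | hzero | hpos
    · -- Slide every `d` along `e` into the hyperplane `φ = 0`, and separate the results by `ψ`.
      -- A combination of `ψ` and `φ` that is just positive on `e` is positive on all of `D`.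
      obtain ⟨ψ, hψ⟩ := ih (D.map fun d => (-(φ ⬝ᵥ e)) • d + (φ ⬝ᵥ d) • e) (by simpa using hD')
        (by
          intro d' hd'
          obtain ⟨d, hd, rfl⟩ := List.mem_map.1 hd'
          exact hadd _ _ (hsmul' _ (by omega) _ (hPD d hd)) (hsmul' _ (hφ d hd) _ hPe))
      obtain ⟨M, hM, hMb⟩ := hbound D (fun d => φ ⬝ᵥ d)
      refine ⟨(-(φ ⬝ᵥ e) * M) • ψ + (M * (ψ ⬝ᵥ e) - 1) • φ, fun d hd => ?_⟩
      simp only [add_dotProduct, smul_dotProduct, smul_eq_mul]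
      rcases List.mem_cons.1 hd with rfl | hd
      · nlinarith
      · have h1 := hψ _ (List.mem_map.2 ⟨d, hd, rfl⟩)
        simp only [dotProduct_add, dotProduct_smul, smul_eq_mul] at h1
        have h2 := hMb d hd
        have h3 : M * 1 ≤ M * (-(φ ⬝ᵥ e) * (ψ ⬝ᵥ d) + (φ ⬝ᵥ d) * (ψ ⬝ᵥ e)) :=
          mul_le_mul_of_nonneg_left (by omega) hM.le
        nlinarith
    · -- A large multiple of `φ` absorbs the values of `⟨e, ·⟩` on `D`.
      obtain ⟨M, hM, hMb⟩ := hbound D (fun d => - (e ⬝ᵥ d))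
      refine ⟨M • φ + e, fun d hd => ?_⟩
      simp only [add_dotProduct, smul_dotProduct, smul_eq_mul]
      rcases List.mem_cons.1 hd with rfl | hd
      · rw [hzero, mul_zero, zero_add]
        have hne : d ≠ 0 := fun h => h0 (h ▸ hPe)
        refine lt_of_le_of_ne (Finset.sum_nonneg fun i _ => mul_self_nonneg _) fun h => hne ?_
        exact dotProduct_self_eq_zero.1 h.symm
      · have h2 := hMb d hd
        have h1 : M * 1 ≤ M * (φ ⬝ᵥ d) :=
          mul_le_mul_of_nonneg_left (by have := hφ d hd; omega) hM.le
        linarith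
    · refine ⟨φ, fun d hd => ?_⟩
      rcases List.mem_cons.1 hd with rfl | hd
      · exact hpos
      · exact hφ d hd

lemma TermOrder.exists_weight (τ : TermOrder n) (S : Finset ((Fin n →₀ ℕ) × (Fin n →₀ ℕ)))
    (hS : ∀ p ∈ S, τ.lt p.1 p.2) : ∃ u : Fin n → ℝ, ∀ p ∈ S, wdeg u p.1 < wdeg u p.2 := by
  let diff : (Fin n →₀ ℕ) × (Fin n →₀ ℕ) → Fin n → ℤ := fun p i => (p.2 i : ℤ) - p.1 i
  obtain ⟨u, hu⟩ := exists_dotProduct_pos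
    (P := fun d => ∃ p : (Fin n →₀ ℕ) × (Fin n →₀ ℕ), τ.lt p.1 p.2 ∧ d = diff p)
    (by
      rintro _ _ ⟨⟨a, b⟩, h, rfl⟩ ⟨⟨a', b'⟩, h', rfl⟩
      refine ⟨(a + a', b + b'), ?_, ?_⟩
      · have h2 := τ.add_right _ _ b h'
        simp only [add_comm _ b] at h2
        exact τ.trans _ _ _ (τ.add_right _ _ a' h) h2
      · funext i
        simp only [diff, Pi.add_apply, Finsupp.add_apply, Nat.cast_add]
        ring)
    (by
      rintro ⟨⟨a, b⟩, h, hab⟩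
      have : a = b := by
        ext i
        have := congrFun hab i
        simp only [diff, Pi.zero_apply] at this
        omega
      exact τ.irrefl a (this ▸ h))
    _ (S.toList.map diff) rfl
    (by
      intro d hd
      obtain ⟨p, hp, rfl⟩ := List.mem_map.1 hd
      exact ⟨p, hS p (Finset.mem_toList.1 hp), rfl⟩)
  refine ⟨fun i => (u i : ℝ), fun p hp => ?_⟩
  have h := hu _ (List.mem_map.2 ⟨p, Finset.mem_toList.2 hp, rfl⟩)
  have h' : (0 : ℝ) < ((u ⬝ᵥ diff p : ℤ) : ℝ) := by exact_mod_cast h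
  simp only [dotProduct, diff, Int.cast_sum, Int.cast_mul, Int.cast_sub, Int.cast_natCast,
    mul_sub, Finset.sum_sub_distrib] at h'
  simp only [wdeg]
  linarith

/-- The equivalence class `{u ∈ ℝ^n : in_u(I) = in_≺(I)}` is a nonempty, open,
convex subset of `ℝ^n` closed under multiplication by positive scalars; in
particular it is a full-dimensional open convex cone. -/
theorem equivalenceClass_of_termOrder_is_open_cone (τ : TermOrder n)
    (I : Ideal (MvPolynomial (Fin n) k)) :
    ({u : Fin n → ℝ | initialFormIdeal u I = τ.initialIdeal I}).Nonempty ∧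
    IsOpen {u : Fin n → ℝ | initialFormIdeal u I = τ.initialIdeal I} ∧
    Convex ℝ {u : Fin n → ℝ | initialFormIdeal u I = τ.initialIdeal I} ∧
    (∀ u ∈ {u : Fin n → ℝ | initialFormIdeal u I = τ.initialIdeal I}, ∀ c : ℝ, 0 < c →
      c • u ∈ {u : Fin n → ℝ | initialFormIdeal u I = τ.initialIdeal I}) := by
  classical
  obtain ⟨A, hfin, hA, hgen⟩ := τ.exists_finite_generators I
  have hex : ∀ α, ∃ g : MvPolynomial (Fin n) k, α ∈ A → τ.IsReducedAt I g α := fun α => by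
    by_cases hα : α ∈ A
    · obtain ⟨g, hg⟩ := τ.exists_isReducedAt (hA hα)
      exact ⟨g, fun _ => hg⟩
    · exact ⟨0, fun h => absurd h hα⟩
  choose g hg using hex
  let S : Finset ((Fin n →₀ ℕ) × (Fin n →₀ ℕ)) :=
    hfin.toFinset.biUnion fun α => ((g α).support.erase α).image fun γ => (γ, α)
  have hS : ∀ p : (Fin n →₀ ℕ) × (Fin n →₀ ℕ),
      p ∈ S ↔ p.2 ∈ A ∧ p.1 ∈ (g p.2).support ∧ p.1 ≠ p.2 := by
    rintro ⟨γ, α⟩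
    simp only [S, Finset.mem_biUnion, Set.Finite.mem_toFinset, Finset.mem_image,
      Finset.mem_erase, Prod.mk.injEq]
    constructor
    · rintro ⟨α', hα', γ', ⟨h1, h2⟩, rfl, rfl⟩
      exact ⟨hα', h2, h1⟩
    · rintro ⟨h1, h2, h3⟩
      exact ⟨α, h1, γ, ⟨h3, h2⟩, rfl, rfl⟩
  have hset : {u : Fin n → ℝ | initialFormIdeal u I = τ.initialIdeal I} =
      ⋂ p ∈ S, {u | wdeg u p.1 < wdeg u p.2} := by
    ext u
    rw [Set.mem_ofPred_eq, TermOrder.initialFormIdeal_eq_iff hA hgen hg u]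
    simp only [Set.mem_iInter, Set.mem_ofPred_eq]
    constructor
    · intro h p hp
      obtain ⟨h1, h2, h3⟩ := (hS p).1 hp
      exact h _ h1 _ h2 h3
    · intro h α hα γ hγ hne
      exact h (γ, α) ((hS _).2 ⟨hα, hγ, hne⟩)
  rw [hset]
  refine ⟨?_, ?_, ?_, ?_⟩
  · obtain ⟨u, hu⟩ := τ.exists_weight S fun p hp => by
      obtain ⟨h1, h2, h3⟩ := (hS p).1 hp
      exact (hg _ h1).lt _ h2 h3
    exact ⟨u, by simpa only [Set.mem_iInter, Set.mem_ofPred_eq] using hu⟩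
  · exact isOpen_biInter_finset fun p _ =>
      isOpen_lt (continuous_wdeg p.1) (continuous_wdeg p.2)
  · refine convex_iInter fun p => convex_iInter fun _ => ?_
    intro u hu v hv a b ha hb hab
    simp only [Set.mem_ofPred_eq, wdeg_add_left, wdeg_smul_left] at *
    rcases ha.eq_or_lt with rfl | ha
    · obtain rfl : b = 1 := by linarith
      linarith
    · exact add_lt_add_of_lt_of_le (mul_lt_mul_of_pos_left hu ha)
        (mul_le_mul_of_nonneg_left hv.le hb)
  · intro u hu c hc
    simp only [Set.mem_iInter, Set.mem_ofPred_eq, wdeg_smul_left] at *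
    exact fun p hp => mul_lt_mul_of_pos_left (hu p hp) hc
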